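/- Let (A, g, h, f, p) be a tense H-algebra and define [N](a) = ¬g(a) ⊓ ¬h(a), where ¬x denotes x ⇨ 0. Then a filter F of A is a negative tense filter if and only if F is closed under [N], i.e. a ∈ F implies [N](a) ∈ F. -/

import Mathlib

structure IsTenseH {A : Type*} [HeytingAlgebra A] (g h f p : A → A) : Prop where
  t1g : g ⊤ = ⊥
  t1h : h ⊤ = ⊥
  t2f : f ⊥ = ⊤
  t2p : p ⊥ = ⊤
  t3g : ∀ x y : A, g (x ⊓ y) = g x ⊔ g y
  t3h : ∀ x y : A, h (x ⊓ y) = h x ⊔ h y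
  t4f : ∀ x y : A, f (x ⊔ y) = f x ⊓ f y
  t4p : ∀ x y : A, p (x ⊔ y) = p x ⊓ p y
  t5gh : ∀ x : A, g (h x) ≤ x
  t5hg : ∀ x : A, h (g x) ≤ x
  t6pf : ∀ x : A, x ≤ p (f x)
  t6fp : ∀ x : A, x ≤ f (p x)
  t7g : ∀ x y : A, g x ⊓ f y ≤ g (x ⊔ y)
  t7h : ∀ x y : A, h x ⊓ p y ≤ h (x ⊔ y)
  t8f : ∀ x y : A, f (x ⊓ y) ≤ f x ⊔ g y
  t8p : ∀ x y : A, p (x ⊓ y) ≤ p x ⊔ h y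

def IsLatFilter {A : Type*} [HeytingAlgebra A] (F : Set A) : Prop :=
  F.Nonempty ∧ (∀ x y : A, x ∈ F → x ≤ y → y ∈ F) ∧ (∀ x y : A, x ∈ F → y ∈ F → x ⊓ y ∈ F)

def IsLatIdeal {A : Type*} [HeytingAlgebra A] (I : Set A) : Prop :=
  I.Nonempty ∧ (∀ x y : A, x ∈ I → y ≤ x → y ∈ I) ∧ (∀ x y : A, x ∈ I → y ∈ I → x ⊔ y ∈ I)

def IsPrimeFilter {A : Type*} [HeytingAlgebra A] (F : Set A) : Prop :=
  IsLatFilter F ∧ (⊥ : A) ∉ F ∧ ∀ x y : A, x ⊔ y ∈ F → x ∈ F ∨ y ∈ F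

def IsNegTenseFilter {A : Type*} [HeytingAlgebra A] (g h f p : A → A) (F : Set A) : Prop :=
  IsLatFilter F ∧
    ∀ u ∈ ({g, h, f, p} : Set (A → A)), ∀ x y : A, x ⇨ y ∈ F → u y ⇨ u x ∈ F

def thetaF {A : Type*} [HeytingAlgebra A] (F : Set A) (x y : A) : Prop :=
  (x ⇨ y) ⊓ (y ⇨ x) ∈ F

def IsTenseCongruence {A : Type*} [HeytingAlgebra A] (g h f p : A → A)
    (θ : A → A → Prop) : Prop :=
  Equivalence θ ∧
    (∀ x₁ y₁ x₂ y₂ : A, θ x₁ y₁ → θ x₂ y₂ → θ (x₁ ⊓ x₂) (y₁ ⊓ y₂)) ∧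
    (∀ x₁ y₁ x₂ y₂ : A, θ x₁ y₁ → θ x₂ y₂ → θ (x₁ ⊔ x₂) (y₁ ⊔ y₂)) ∧
    (∀ x₁ y₁ x₂ y₂ : A, θ x₁ y₁ → θ x₂ y₂ → θ (x₁ ⇨ x₂) (y₁ ⇨ y₂)) ∧
    ∀ u ∈ ({g, h, f, p} : Set (A → A)), ∀ x y : A, θ x y → θ (u x) (u y)

def Nop {A : Type*} [HeytingAlgebra A] (g h : A → A) (a : A) : A :=
  (g a ⇨ ⊥) ⊓ (h a ⇨ ⊥)

def NIter {A : Type*} [HeytingAlgebra A] (N : A → A) : ℕ → A → A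
  | 0, a => a
  | n + 1, a => N (NIter N n a)

def NPar {A : Type*} [HeytingAlgebra A] (N : A → A) : ℕ → A → A
  | 0, a => NIter N 0 a
  | k + 1, a => NPar N k a ⊓ NIter N (k + 1) a

/-! `x ⇨ y` measures the extent to which `x ≤ y`. Each of the four operators `u` is antitone in a
correspondingly graded sense, `u y ≤ u x ⊔ k (x ⇨ y)`, with `k = g` for `u = g, f` and `k = h` for
`u = h, p`. Residuating gives `(k (x ⇨ y))ᶜ ≤ u y ⇨ u x`, so closure under `[N]` suffices. For the
converse, `a = ⊤ ⇨ a` and `g ⊤ = h ⊤ = ⊥` exhibit both meetands of `[N](a)` as `u a ⇨ u ⊤`. -/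

theorem antitone_of_map_inf {α β : Type*} [SemilatticeInf α] [SemilatticeSup β] {u : α → β}
    (hu : ∀ x y, u (x ⊓ y) = u x ⊔ u y) : Antitone u :=
  Monotone.of_map_inf (β := βᵒᵈ) hu

theorem antitone_of_map_sup {α β : Type*} [SemilatticeSup α] [SemilatticeInf β] {u : α → β}
    (hu : ∀ x y, u (x ⊔ y) = u x ⊓ u y) : Antitone u :=
  Monotone.of_map_sup (β := βᵒᵈ) hu

theorem compl_le_himp_of_le_sup {α : Type*} [HeytingAlgebra α] {a b c : α} (h : b ≤ c ⊔ a) :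
    aᶜ ≤ b ⇨ c :=
  calc
    aᶜ ≤ a ⇨ c := compl_le_himp
    _ = c ⊔ a ⇨ c := (sup_himp_self_left c a).symm
    _ ≤ b ⇨ c := himp_le_himp_right h

/-- Graded antitonicity: `u` reverses the order up to an error that `k` extracts from `x ⇨ y`, the
extent to which `x ≤ y` holds. It isolates what the closure argument needs of each
tense operator. -/
def AntitoneUpTo {A B : Type*} [GeneralizedHeytingAlgebra A] [SemilatticeSup B]
    (k u : A → B) : Prop :=
  ∀ x y, u y ≤ u x ⊔ k (x ⇨ y)

namespace AntitoneUpTo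

theorem of_map_inf_le {A B : Type*} [GeneralizedHeytingAlgebra A] [SemilatticeSup B]
    {k u : A → B} (hu : Antitone u) (huk : ∀ x y, u (x ⊓ y) ≤ u x ⊔ k y) : AntitoneUpTo k u :=
  fun x y ↦ (hu inf_himp_le).trans (huk x (x ⇨ y))

theorem compl_le_himp {A B : Type*} [GeneralizedHeytingAlgebra A] [HeytingAlgebra B]
    {k u : A → B} (hu : AntitoneUpTo k u) (x y : A) : (k (x ⇨ y))ᶜ ≤ u y ⇨ u x :=
  compl_le_himp_of_le_sup (hu x y)

end AntitoneUpTo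

namespace IsTenseH

variable {A : Type*} [HeytingAlgebra A] {g h f p : A → A}

theorem antitoneUpTo_g_g (H : IsTenseH g h f p) : AntitoneUpTo g g :=
  .of_map_inf_le (antitone_of_map_inf H.t3g) fun x y ↦ (H.t3g x y).le

theorem antitoneUpTo_h_h (H : IsTenseH g h f p) : AntitoneUpTo h h :=
  .of_map_inf_le (antitone_of_map_inf H.t3h) fun x y ↦ (H.t3h x y).le

theorem antitoneUpTo_g_f (H : IsTenseH g h f p) : AntitoneUpTo g f :=
  .of_map_inf_le (antitone_of_map_sup H.t4f) H.t8f

theorem antitoneUpTo_h_p (H : IsTenseH g h f p) : AntitoneUpTo h p :=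
  .of_map_inf_le (antitone_of_map_sup H.t4p) H.t8p

end IsTenseH

section Filters

variable {A : Type*} [HeytingAlgebra A] {g h f p : A → A} {F : Set A}

theorem IsLatFilter.nop_mem_iff (hF : IsLatFilter F) {a : A} :
    Nop g h a ∈ F ↔ (g a)ᶜ ∈ F ∧ (h a)ᶜ ∈ F := by
  obtain ⟨-, mem_of_le, inf_mem⟩ := hF
  rw [Nop, himp_bot, himp_bot]
  exact ⟨fun ha ↦ ⟨mem_of_le _ _ ha inf_le_left, mem_of_le _ _ ha inf_le_right⟩,
    fun ha ↦ inf_mem _ _ ha.1 ha.2⟩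

theorem IsNegTenseFilter.compl_mem (hF : IsNegTenseFilter g h f p F) {u : A → A}
    (hu : u ∈ ({g, h, f, p} : Set (A → A))) (hu_top : u ⊤ = ⊥) {a : A} (ha : a ∈ F) :
    (u a)ᶜ ∈ F := by
  have himp_mem : u a ⇨ u ⊤ ∈ F := hF.2 u hu ⊤ a (by rwa [top_himp])
  rwa [hu_top, himp_bot] at himp_mem

theorem stmt14_general (g_top : g ⊤ = ⊥) (h_top : h ⊤ = ⊥) (hg : AntitoneUpTo g g)
    (hh : AntitoneUpTo h h) (hf : AntitoneUpTo g f) (hp : AntitoneUpTo h p)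
    (hF : IsLatFilter F) :
    IsNegTenseFilter g h f p F ↔ ∀ a ∈ F, Nop g h a ∈ F := by
  constructor
  · intro hneg a ha
    exact hF.nop_mem_iff.2
      ⟨hneg.compl_mem (by simp) g_top ha, hneg.compl_mem (by simp) h_top ha⟩
  · intro hN
    refine ⟨hF, fun u hu x y hxy ↦ ?_⟩
    obtain ⟨hgF, hhF⟩ := hF.nop_mem_iff.1 (hN _ hxy)
    have mem_of_le := hF.2.1
    rcases hu with rfl | rfl | rfl | rfl
    · exact mem_of_le _ _ hgF (hg.compl_le_himp x y)
    · exact mem_of_le _ _ hhF (hh.compl_le_himp x y)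
    · exact mem_of_le _ _ hgF (hf.compl_le_himp x y)
    · exact mem_of_le _ _ hhF (hp.compl_le_himp x y)

end Filters

theorem stmt14 {A : Type*} [HeytingAlgebra A] (g h f p : A → A)
    (H : IsTenseH g h f p) (F : Set A) (hF : IsLatFilter F) :
    IsNegTenseFilter g h f p F ↔
      ∀ a : A, a ∈ F → (g a ⇨ ⊥) ⊓ (h a ⇨ ⊥) ∈ F :=
  stmt14_general H.t1g H.t1h H.antitoneUpTo_g_g H.antitoneUpTo_h_h H.antitoneUpTo_g_f
    H.antitoneUpTo_h_p hF
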